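/- Let R and S be symmetric real n×n matrices with [[R, I],[I, S]] positive definite, and let U, V be real n×n matrices with V·Uᵀ = I − R·S. Then: (i) U and V are invertible; (ii) the 2n×2n block matrix [[R, I],[Vᵀ, 0]] is invertible; and (iii) the matrix X := [[I, S],[0, Uᵀ]] · [[R, I],[Vᵀ, 0]]⁻¹ is symmetric and positive definite. -/

import Mathlib

open Matrix

/-- reconstruction of the Lyapunov matrix `X` from the
transformed decision variables `(S, R, U, V)` with `V Uᵀ = I − R S`. -/
theorem stmt_12 (n : ℕ) (R S U V : Matrix (Fin n) (Fin n) ℝ)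
    (hR : R.IsSymm) (hS : S.IsSymm)
    (hblk : (Matrix.fromBlocks R 1 1 S).PosDef)
    (hUV : V * Uᵀ = 1 - R * S) :
    IsUnit U ∧ IsUnit V ∧
    IsUnit (Matrix.fromBlocks R (1 : Matrix (Fin n) (Fin n) ℝ) Vᵀ (0 : Matrix (Fin n) (Fin n) ℝ)) ∧
    (Matrix.fromBlocks (1 : Matrix (Fin n) (Fin n) ℝ) S (0 : Matrix (Fin n) (Fin n) ℝ) Uᵀ * (Matrix.fromBlocks R (1 : Matrix (Fin n) (Fin n) ℝ) Vᵀ (0 : Matrix (Fin n) (Fin n) ℝ))⁻¹).PosDef := by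
  set Y := Matrix.fromBlocks R (1 : Matrix (Fin n) (Fin n) ℝ) Vᵀ 0 with hY
  set Z := Matrix.fromBlocks (1 : Matrix (Fin n) (Fin n) ℝ) S 0 Uᵀ with hZ
  have hYZ : Yᵀ * Z = Matrix.fromBlocks R 1 1 S := by
    simp [hY, hZ, fromBlocks_transpose, fromBlocks_multiply, hR.eq, hUV]
  have hprod : IsUnit (Yᵀ * Z) := hYZ ▸ hblk.isUnit
  rw [isUnit_iff_isUnit_det, det_mul, IsUnit.mul_iff, det_transpose,
    ← isUnit_iff_isUnit_det, ← isUnit_iff_isUnit_det] at hprod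
  obtain ⟨hYu, hZu⟩ := hprod
  have hU : IsUnit U := (isUnit_transpose U).1 (isUnit_fromBlocks_zero₂₁.1 hZu).2
  have hV : IsUnit V := by
    let J : Matrix (Fin n ⊕ Fin n) (Fin n ⊕ Fin n) ℝ := Matrix.fromBlocks 0 1 1 0
    have hJ : IsUnit J := IsUnit.of_mul_eq_one J (by simp [J, fromBlocks_multiply])
    have hYJ : Y * J = Matrix.fromBlocks 1 R 0 Vᵀ := by
      simp [hY, J, fromBlocks_multiply]
    exact (isUnit_transpose V).1 (isUnit_fromBlocks_zero₂₁.1 (hYJ ▸ hYu.mul hJ)).2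
  refine ⟨hU, hV, hYu, ?_⟩
  rw [← hYu.posDef_star_left_conjugate_iff, mul_assoc, mul_assoc,
    nonsing_inv_mul _ ((isUnit_iff_isUnit_det Y).1 hYu), mul_one, star_eq_conjTranspose,
    conjTranspose_eq_transpose_of_trivial, hYZ]
  exact hblk
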